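/- arXiv:1604.02845 — 2 statements merged into one kernel-verified Lean document; each statement's English description precedes it below -/
import Mathlib

section
/- Let $R$ be a commutative ring, let $h \in R$, let $n$ be a natural number, and let $(c_k)_{k=0}^{n}$ and $(M_k)_{k=0}^{n}$ be families of elements of $R$. If for every $k$ with $0 \le k \le n$ one has $M_k = \sum_{i=0}^{k} (-1)^{i} \binom{n-i+1}{n-k+1} h^{k-i} c_i$, then for every $k$ with $0 \le k \le n$ one has $c_k = \sum_{i=0}^{k} (-1)^{i} \binom{n-i+1}{n-k+1} h^{k-i} M_i$. -/
theorem inner_aux {R : Type*} [CommRing R] (h : R) (n k j : ℕ) (hk : k ≤ n) (hj : j ≤ k) (x : R) :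
    ∑ i ∈ Finset.Ico j (k + 1),
      (-1 : R) ^ i * (Nat.choose (n - i + 1) (n - k + 1) : R) * h ^ (k - i) *
        ((-1 : R) ^ j * (Nat.choose (n - j + 1) (n - i + 1) : R) * h ^ (i - j) * x)
      = if j = k then x else 0 := by
  obtain ⟨d, rfl⟩ := Nat.exists_eq_add_of_le hj
  have key : ∀ m ∈ Finset.range (d + 1),
      (-1 : R) ^ (j + m) * (Nat.choose (n - (j + m) + 1) (n - (j + d) + 1) : R)
        * h ^ (j + d - (j + m)) *
        ((-1 : R) ^ j * (Nat.choose (n - j + 1) (n - (j + m) + 1) : R) * h ^ (j + m - j) * x)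
      = ((-1 : R) ^ m * (d.choose m : R)) *
        ((Nat.choose (n - j + 1) (n - (j + d) + 1) : R) * h ^ d * x) := by
    intro m hm
    have hm' : m ≤ d := by simpa [Nat.lt_succ_iff] using hm
    have e := @Nat.choose_mul (n - j + 1) (n - (j + m) + 1) (n - (j + d) + 1) (by omega)
    rw [show n - j + 1 - (n - (j + d) + 1) = d by omega,
      show n - (j + m) + 1 - (n - (j + d) + 1) = d - m by omega, Nat.choose_symm hm'] at e
    have e' := congrArg (Nat.cast : ℕ → R) e
    push_cast at e'
    have hp : h ^ d = h ^ (j + d - (j + m)) * h ^ (j + m - j) := by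
      rw [← pow_add]; congr 1; omega
    have hs : (-1 : R) ^ (j + m) * (-1) ^ j = (-1) ^ m := by
      rw [← pow_add, show j + m + j = 2 * j + m by ring, pow_add, pow_mul]; simp
    rw [hp, ← hs]
    linear_combination ((-1 : R) ^ (j + m) * (-1) ^ j * h ^ (j + d - (j + m)) *
      h ^ (j + m - j) * x) * e'
  rw [Finset.sum_Ico_eq_sum_range, show j + d + 1 - j = d + 1 by omega,
    Finset.sum_congr rfl key, ← Finset.sum_mul]
  have a := congrArg (Int.cast : ℤ → R) (@Int.alternating_sum_range_choose d)
  push_cast at a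
  rw [a]
  rcases Nat.eq_zero_or_pos d with rfl | hd
  · simp
  · rw [if_neg (by omega), if_neg (by omega), zero_mul]


/-- Reciprocity: if `M_k = ∑_{i=0}^{k} (-1)^i C(n-i+1, n-k+1) h^{k-i} c_i` for all
`k ≤ n`, then `c_k = ∑_{i=0}^{k} (-1)^i C(n-i+1, n-k+1) h^{k-i} M_i` for all `k ≤ n`. -/
theorem polar_chernMather_reciprocity {R : Type*} [CommRing R] (h : R) (n : ℕ)
    (c M : ℕ → R)
    (hM : ∀ k, k ≤ n →
      M k = ∑ i ∈ Finset.range (k + 1),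
        (-1 : R) ^ i * (Nat.choose (n - i + 1) (n - k + 1) : R) * h ^ (k - i) * c i) :
    ∀ k, k ≤ n →
      c k = ∑ i ∈ Finset.range (k + 1),
        (-1 : R) ^ i * (Nat.choose (n - i + 1) (n - k + 1) : R) * h ^ (k - i) * M i := by
  intro k hk
  have e1 : ∀ i ∈ Finset.range (k + 1),
      (-1 : R) ^ i * (Nat.choose (n - i + 1) (n - k + 1) : R) * h ^ (k - i) * M i
      = ∑ j ∈ Finset.range (i + 1),
        (-1 : R) ^ i * (Nat.choose (n - i + 1) (n - k + 1) : R) * h ^ (k - i) *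
        ((-1 : R) ^ j * (Nat.choose (n - j + 1) (n - i + 1) : R) * h ^ (i - j) * c j) := by
    intro i hi
    rw [Finset.mem_range] at hi
    rw [hM i (by omega), Finset.mul_sum]
  rw [Finset.sum_congr rfl e1,
    Finset.sum_comm' (t' := Finset.range (k + 1)) (s' := fun j => Finset.Ico j (k + 1))
      (by intro i j; simp only [Finset.mem_range, Finset.mem_Ico]; omega),
    Finset.sum_congr rfl (fun j hj => inner_aux h n k j hk
      (by rw [Finset.mem_range] at hj; omega) (c j))]
  simp
end

section
/- Let $R$ be a commutative ring, let $h \in R$, let $n$ be a natural number, and let $(c_k)_{k=0}^{n}$ be a family of elements of $R$. Define $M_k := \sum_{i=0}^{k} (-1)^{i} \binom{n-i+1}{n-k+1} h^{k-i} c_i$ for $0 \le k \le n$, and then define $c'_k := \sum_{i=0}^{k} (-1)^{i} \binom{n-i+1}{n-k+1} h^{k-i} M_i$ for $0 \le k \le n$. Then $c'_k = c_k$ for all $0 \le k \le n$; that is, the linear transformation on finite sequences in $R$ with kernel $(-1)^i \binom{n-i+1}{n-k+1} h^{k-i}$ is an involution. -/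
/-- The transformation on finite sequences in a commutative ring `R` with kernel
`(-1)^i C(n-i+1, n-k+1) h^{k-i}` is an involution: applying it twice to
`(c_k)_{k=0}^{n}` returns the original sequence. -/
theorem polar_chernMather_involution {R : Type*} [CommRing R] (h : R) (n : ℕ)
    (c M c' : ℕ → R)
    (hM : ∀ k, k ≤ n →
      M k = ∑ i ∈ Finset.range (k + 1),
        (-1 : R) ^ i * (Nat.choose (n - i + 1) (n - k + 1) : R) * h ^ (k - i) * c i)
    (hc' : ∀ k, k ≤ n →
      c' k = ∑ i ∈ Finset.range (k + 1),
        (-1 : R) ^ i * (Nat.choose (n - i + 1) (n - k + 1) : R) * h ^ (k - i) * M i) :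
    ∀ k, k ≤ n → c' k = c k := by
  intro k hk
  rw [hc' k hk]
  have h1 : ∀ i ∈ Finset.range (k + 1),
      (-1 : R) ^ i * (Nat.choose (n - i + 1) (n - k + 1) : R) * h ^ (k - i) * M i
      = ∑ j ∈ Finset.range (i + 1),
        (-1 : R) ^ i * (Nat.choose (n - i + 1) (n - k + 1) : R) * h ^ (k - i) *
        ((-1 : R) ^ j * (Nat.choose (n - j + 1) (n - i + 1) : R) * h ^ (i - j) * c j) := by
    intro i hi
    rw [hM i (by have := Finset.mem_range.1 hi; omega), Finset.mul_sum]
  rw [Finset.sum_congr rfl h1]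
  rw [Finset.sum_comm' (t' := Finset.range (k + 1)) (s' := fun j => Finset.Ico j (k + 1))
    (by intro x y; simp only [Finset.mem_range, Finset.mem_Ico]; omega)]
  have h2 : ∀ j ∈ Finset.range (k + 1),
      (∑ i ∈ Finset.Ico j (k + 1),
        (-1 : R) ^ i * (Nat.choose (n - i + 1) (n - k + 1) : R) * h ^ (k - i) *
        ((-1 : R) ^ j * (Nat.choose (n - j + 1) (n - i + 1) : R) * h ^ (i - j) * c j))
      = if j = k then c j else 0 := by
    intro j hj
    have hj : j ≤ k := by have := Finset.mem_range.1 hj; omega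
    rw [Finset.sum_Ico_eq_sum_range, show k + 1 - j = (k - j) + 1 by omega]
    have h3 : ∀ m ∈ Finset.range (k - j + 1),
        (-1 : R) ^ (j + m) * (Nat.choose (n - (j + m) + 1) (n - k + 1) : R) * h ^ (k - (j + m)) *
        ((-1 : R) ^ j * (Nat.choose (n - j + 1) (n - (j + m) + 1) : R) * h ^ (j + m - j) * c j)
        = ((-1 : R) ^ m * (Nat.choose (k - j) m : R)) *
          ((Nat.choose (n - j + 1) (n - k + 1) : R) * h ^ (k - j) * c j) := by
      intro m hm
      have hm : m ≤ k - j := by have := Finset.mem_range.1 hm; omega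
      have e := Nat.choose_mul (n := n - j + 1) (k := n - (j + m) + 1) (s := n - k + 1)
        (by omega)
      rw [show n - j + 1 - (n - k + 1) = k - j by omega,
        show n - (j + m) + 1 - (n - k + 1) = k - j - m by omega, Nat.choose_symm hm] at e
      have e' := congrArg (Nat.cast : ℕ → R) e
      push_cast at e'
      have e2 : h ^ (k - (j + m)) * h ^ (j + m - j) = h ^ (k - j) := by
        rw [← pow_add]; congr 1; omega
      have e3 : (-1 : R) ^ (j + m) * (-1) ^ j = (-1) ^ m := by
        rw [← pow_add, show j + m + j = 2 * j + m by omega, pow_add, pow_mul]; simp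
      rw [← e2, ← e3]
      linear_combination ((-1 : R) ^ (j + m) * (-1) ^ j *
        (h ^ (k - (j + m)) * h ^ (j + m - j)) * c j) * e'
    rw [Finset.sum_congr rfl h3, ← Finset.sum_mul]
    have a := congrArg (Int.cast : ℤ → R) (Int.alternating_sum_range_choose (n := k - j))
    push_cast at a
    rw [a]
    by_cases hjk : j = k
    · subst hjk; simp
    · rw [if_neg hjk, if_neg (by omega)]; simp
  rw [Finset.sum_congr rfl h2]
  simp
end
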